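/- Let d ≥ 2, let X be a real Banach space, and let f ∈ C_c^∞(ℝ^d, X). Then the Newtonian potential Φ ∗ f belongs to C^∞(ℝ^d, X) and satisfies Δ(Φ ∗ f)(ξ) = f(ξ) for every ξ ∈ ℝ^d. -/

import Mathlib

open MeasureTheory

/-- The `i`-th standard basis vector of `ℝ^d`. -/
noncomputable def stdBasis {d : ℕ} (i : Fin d) : EuclideanSpace ℝ (Fin d) :=
  EuclideanSpace.single i (1 : ℝ)

/-- The Laplacian `Δu(x) = Σᵢ DᵢDᵢ u (x)` of a function `u : ℝ^d → X`. -/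
noncomputable def lap {d : ℕ} {X : Type*} [NormedAddCommGroup X] [NormedSpace ℝ X]
    (u : EuclideanSpace ℝ (Fin d) → X) (x : EuclideanSpace ℝ (Fin d)) : X :=
  ∑ i : Fin d, fderiv ℝ (fun y => fderiv ℝ u y (stdBasis i)) x (stdBasis i)

/-- The fundamental solution of the Laplace equation on `ℝ^d`. -/
noncomputable def fundSol (d : ℕ) (ξ : EuclideanSpace ℝ (Fin d)) : ℝ :=
  if d = 2 then (2 * Real.pi)⁻¹ * Real.log ‖ξ‖
  else ((d : ℝ) * ((2 : ℝ) - d) *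
      (volume (Metric.ball (0 : EuclideanSpace ℝ (Fin d)) 1)).toReal)⁻¹ *
    ‖ξ‖ ^ ((2 : ℝ) - d)

open Set Filter Topology Metric

noncomputable def npK (d : ℕ) : ℝ :=
  ((d : ℝ) * (volume (Metric.ball (0 : EuclideanSpace ℝ (Fin d)) 1)).toReal)⁻¹

noncomputable def psi (d : ℕ) (s : ℝ) : ℝ :=
  if d = 2 then (4 * Real.pi)⁻¹ * Real.log s
  else ((d : ℝ) * ((2 : ℝ) - d) *
      (volume (Metric.ball (0 : EuclideanSpace ℝ (Fin d)) 1)).toReal)⁻¹ *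
    s ^ (((2 : ℝ) - d) / 2)

noncomputable def bnd (d : ℕ) (r : ℝ) : ℝ := r ^ (1 - (d : ℝ)) + 1 + r ^ 2

lemma fundSol_eq_psi (d : ℕ) (y : EuclideanSpace ℝ (Fin d)) :
    fundSol d y = psi d (‖y‖ ^ 2) := by
  unfold fundSol psi
  split_ifs with h
  · rw [Real.log_pow]; push_cast; field_simp; ring
  · congr 1
    rw [← Real.rpow_natCast, ← Real.rpow_mul (norm_nonneg _)]
    congr 1; push_cast; ring

lemma hasDerivAt_psi {d : ℕ} (hd : 2 ≤ d) {s : ℝ} (hs : 0 < s) :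
    HasDerivAt (psi d) (npK d / 2 * s ^ (-(d : ℝ) / 2)) s := by
  unfold psi npK
  split_ifs with h
  · subst h
    have := (Real.hasDerivAt_log hs.ne').const_mul (4 * Real.pi)⁻¹
    refine this.congr_deriv ?_
    simp [EuclideanSpace.volume_ball_fin_two, ENNReal.toReal_ofReal Real.pi_pos.le,
      Real.rpow_neg_one]
    ring_nf
    simp
  · have h2 : (2 : ℝ) - d ≠ 0 := by
      intro h'; apply h; have : (d : ℝ) = 2 := by linarith
      exact_mod_cast this
    have := (Real.hasDerivAt_rpow_const (p := ((2 : ℝ) - d) / 2) (Or.inl hs.ne')).const_mul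
      ((d : ℝ) * ((2 : ℝ) - d) *
      (volume (Metric.ball (0 : EuclideanSpace ℝ (Fin d)) 1)).toReal)⁻¹
    refine this.congr_deriv ?_
    have e : ((2 : ℝ) - d) / 2 - 1 = -(d : ℝ) / 2 := by ring
    rw [e, mul_inv, mul_inv, mul_inv]
    field_simp

lemma psi_bound {d : ℕ} (hd : 2 ≤ d) : ∃ C : ℝ, ∀ r ε : ℝ, 0 < r → 0 ≤ ε → ε ≤ 1 →
    |psi d (r ^ 2 + ε)| ≤ C * bnd d r := by
  by_cases h : d = 2
  · subst h
    refine ⟨(4 * Real.pi)⁻¹ * 2, fun r ε hr h0 h1 => ?_⟩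
    simp only [psi, if_true, bnd, abs_mul]
    rw [abs_of_pos (by positivity : 0 < (4 * Real.pi)⁻¹), mul_assoc]
    refine mul_le_mul_of_nonneg_left ?_ (by positivity)
    have e : r ^ (1 - ((2 : ℕ) : ℝ)) = r⁻¹ := by
      rw [← Real.rpow_neg_one]; norm_num
    rw [e, abs_le]
    have hi : 0 < r⁻¹ := inv_pos.2 hr
    constructor
    · have a1 : Real.log (r ^ 2) ≤ Real.log (r ^ 2 + ε) :=
        Real.log_le_log (by positivity) (by linarith)
      rw [Real.log_pow] at a1
      have a2 := Real.log_le_sub_one_of_pos hi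
      rw [Real.log_inv] at a2
      push_cast at a1
      nlinarith [sq_nonneg r]
    · have a1 := Real.log_le_sub_one_of_pos (by positivity : 0 < r ^ 2 + ε)
      nlinarith [sq_nonneg r]
  · have hd3 : (3 : ℝ) ≤ d := by
      have : 3 ≤ d := by omega
      exact_mod_cast this
    refine ⟨|((d : ℝ) * ((2 : ℝ) - d) *
      (volume (Metric.ball (0 : EuclideanSpace ℝ (Fin d)) 1)).toReal)⁻¹|, fun r ε hr h0 h1 => ?_⟩
    simp only [psi, if_neg h, bnd, abs_mul]
    refine mul_le_mul_of_nonneg_left ?_ (abs_nonneg _)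
    rw [abs_of_nonneg (by positivity)]
    calc (r ^ 2 + ε) ^ ((2 - (d : ℝ)) / 2) ≤ (r ^ 2) ^ ((2 - (d : ℝ)) / 2) :=
          Real.rpow_le_rpow_of_nonpos (by positivity) (by linarith) (by linarith)
      _ = r ^ (2 - (d : ℝ)) := by
          rw [← Real.rpow_natCast, ← Real.rpow_mul hr.le]; congr 1; push_cast; ring
      _ ≤ _ := by
          rcases le_total r 1 with h | h
          · have := Real.rpow_le_rpow_of_exponent_ge hr h (by linarith : 1 - (d : ℝ) ≤ 2 - d)
            nlinarith [sq_nonneg r]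
          · have := Real.rpow_le_one_of_one_le_of_nonpos h (by linarith : 2 - (d : ℝ) ≤ 0)
            have : 0 ≤ r ^ (1 - (d : ℝ)) := by positivity
            nlinarith [sq_nonneg r]

lemma locallyIntegrable_rpow {d : ℕ} (hd : 2 ≤ d) :
    LocallyIntegrable (fun y : EuclideanSpace ℝ (Fin d) => ‖y‖ ^ (1 - (d : ℝ))) := by
  refine locallyIntegrable_of_norm_le_rpow (C := 1) (α := d - 1) ?_ ?_ ?_ ?_
  · rw [finrank_euclideanSpace_fin]; omega
  · simp
  · refine Eventually.of_forall fun x => ?_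
    rw [Real.norm_of_nonneg (by positivity), neg_sub, one_mul]
  · exact (measurable_norm.pow_const _).aestronglyMeasurable

lemma locallyIntegrable_bnd {d : ℕ} (hd : 2 ≤ d) :
    LocallyIntegrable (fun y : EuclideanSpace ℝ (Fin d) => bnd d ‖y‖) := by
  unfold bnd
  refine ((locallyIntegrable_rpow hd).add (locallyIntegrable_const _)).add ?_
  exact (by fun_prop : Continuous fun y : EuclideanSpace ℝ (Fin d) => ‖y‖ ^ 2).locallyIntegrable

lemma measurable_psi (d : ℕ) : Measurable (psi d) := by
  unfold psi
  split_ifs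
  · exact Real.measurable_log.const_mul _
  · exact (measurable_id.pow_const _).const_mul _

lemma ae_ne_zero {d : ℕ} (hd : 2 ≤ d) : ∀ᵐ y : EuclideanSpace ℝ (Fin d), y ≠ 0 := by
  have : Nontrivial (EuclideanSpace ℝ (Fin d)) := by
    apply Module.nontrivial_of_finrank_pos (R := ℝ); simp; omega
  exact Measure.ae_ne volume 0

lemma locallyIntegrable_fundSol {d : ℕ} (hd : 2 ≤ d) :
    LocallyIntegrable (fundSol d) := by
  obtain ⟨C, hC⟩ := psi_bound hd
  refine ((locallyIntegrable_bnd hd).smul C).mono ?_ ?_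
  · rw [funext (fundSol_eq_psi d)]
    exact ((measurable_psi d).comp (measurable_norm.pow_const 2)).aestronglyMeasurable
  · filter_upwards [ae_ne_zero hd] with y hy
    have := hC ‖y‖ 0 (norm_pos_iff.2 hy) le_rfl zero_le_one
    rw [add_zero, ← fundSol_eq_psi] at this
    exact this.trans (le_abs_self _)

lemma integrable_bnd_smul {d : ℕ} (hd : 2 ≤ d) {X : Type*} [NormedAddCommGroup X]
    [NormedSpace ℝ X] {h : EuclideanSpace ℝ (Fin d) → X} (hc : Continuous h)
    (hs : HasCompactSupport h) : Integrable (fun y => bnd d ‖y‖ * ‖h y‖) :=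
  (locallyIntegrable_bnd hd).integrable_smul_right_of_hasCompactSupport hc.norm hs.norm

lemma rpow_mul_le_bnd {d : ℕ} {r : ℝ} (hr : 0 < r) : r ^ (-(d : ℝ)) * r ≤ bnd d r := by
  unfold bnd
  have : r ^ (-(d : ℝ)) * r = r ^ (1 - (d : ℝ)) := by
    nth_rw 2 [← Real.rpow_one r]
    rw [← Real.rpow_add hr]; congr 1; ring
  rw [this]; nlinarith [sq_nonneg r]

lemma bnd_nonneg {d : ℕ} {r : ℝ} (hr : 0 ≤ r) : 0 ≤ bnd d r := by
  unfold bnd; positivity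

lemma integrable_polar {d : ℕ} (hd : 2 ≤ d) {X : Type*} [NormedAddCommGroup X]
    [NormedSpace ℝ X] {g : EuclideanSpace ℝ (Fin d) → X} (hg : ContDiff ℝ 1 g)
    (hs : HasCompactSupport g) :
    Integrable (fun y => ‖y‖ ^ (-(d : ℝ)) • fderiv ℝ g y y) := by
  have hc : Continuous (fderiv ℝ g) := hg.continuous_fderiv one_ne_zero
  refine (integrable_bnd_smul hd hc (hs.fderiv ℝ)).mono' ?_ ?_
  · refine AEStronglyMeasurable.smul ?_ ?_
    · exact (measurable_norm.pow_const _).aestronglyMeasurable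
    · exact (hc.clm_apply continuous_id).aestronglyMeasurable
  · filter_upwards [ae_ne_zero hd] with y hy
    have hy' := norm_pos_iff.2 hy
    rw [norm_smul, Real.norm_of_nonneg (by positivity)]
    calc _ ≤ ‖y‖ ^ (-(d : ℝ)) * (‖fderiv ℝ g y‖ * ‖y‖) := by
          gcongr; exact (fderiv ℝ g y).le_opNorm y
      _ = (‖y‖ ^ (-(d : ℝ)) * ‖y‖) * ‖fderiv ℝ g y‖ := by ring
      _ ≤ _ := by gcongr; exact rpow_mul_le_bnd hy'

lemma integral_ray {d : ℕ} {X : Type*} [NormedAddCommGroup X]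
    [NormedSpace ℝ X] [CompleteSpace X] {g : EuclideanSpace ℝ (Fin d) → X} (hg : ContDiff ℝ 1 g)
    (hs : HasCompactSupport g) (θ : EuclideanSpace ℝ (Fin d)) (hθ : ‖θ‖ = 1) :
    ∫ r in Ioi (0 : ℝ), fderiv ℝ g (r • θ) θ = - g 0 := by
  have h1 : ContDiff ℝ 1 (fun r : ℝ => g (r • θ)) := hg.comp (by fun_prop)
  have h2 : HasCompactSupport (fun r : ℝ => g (r • θ)) := by
    obtain ⟨R, hR⟩ := hs.isCompact.isBounded.exists_norm_le
    refine HasCompactSupport.intro (isCompact_closedBall 0 R) fun x hx => ?_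
    by_contra hne
    apply hx
    have := hR _ (subset_tsupport g (Function.mem_support.2 hne))
    rw [norm_smul, hθ, mul_one] at this
    simpa using this
  have h3 := h2.integral_Ioi_deriv_eq h1 0
  rw [zero_smul] at h3
  rw [← h3]
  congr 1
  ext r
  have a1 : HasFDerivAt g (fderiv ℝ g (r • θ)) (r • θ) :=
    (hg.differentiable one_ne_zero _).hasFDerivAt
  have a2 : HasDerivAt (fun r : ℝ => r • θ) θ r := by
    simpa using (hasDerivAt_id r).smul_const θ
  exact (a1.comp_hasDerivAt r a2).deriv.symm

lemma integral_polar {d : ℕ} (hd : 2 ≤ d) {X : Type*} [NormedAddCommGroup X]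
    [NormedSpace ℝ X] [CompleteSpace X] {g : EuclideanSpace ℝ (Fin d) → X} (hg : ContDiff ℝ 1 g)
    (hs : HasCompactSupport g) :
    ∫ y, ‖y‖ ^ (-(d : ℝ)) • fderiv ℝ g y y =
      -(((d : ℝ) * (volume (Metric.ball (0 : EuclideanSpace ℝ (Fin d)) 1)).toReal) • g 0) := by
  have : Nontrivial (EuclideanSpace ℝ (Fin d)) := by
    apply Module.nontrivial_of_finrank_pos (R := ℝ); rw [finrank_euclideanSpace_fin]; omega
  set F : (EuclideanSpace ℝ (Fin d)) → X := fun y => ‖y‖ ^ (-(d : ℝ)) • fderiv ℝ g y y with hF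
  have hFi : Integrable F := integrable_polar hd hg hs
  let G : sphere (0 : (EuclideanSpace ℝ (Fin d))) 1 × Ioi (0 : ℝ) → X := fun p => F (p.2.1 • p.1.1)
  have hGF : ∀ x : ({0}ᶜ : Set (EuclideanSpace ℝ (Fin d))), G (homeomorphUnitSphereProd (EuclideanSpace ℝ (Fin d)) x) = F x := by
    intro x
    have : ‖x.1‖ ≠ 0 := norm_ne_zero_iff.2 x.2
    simp [G, smul_smul, this]
  have hmp := (volume : Measure (EuclideanSpace ℝ (Fin d))).measurePreserving_homeomorphUnitSphereProd
  have hGi : Integrable G ((volume : Measure (EuclideanSpace ℝ (Fin d))).toSphere.prod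
      (.volumeIoiPow (Module.finrank ℝ (EuclideanSpace ℝ (Fin d)) - 1))) := by
    rw [← hmp.integrable_comp_emb (Homeomorph.measurableEmbedding _)]
    have : G ∘ (homeomorphUnitSphereProd (EuclideanSpace ℝ (Fin d))) = F ∘ Subtype.val := funext hGF
    rw [this, ← integrableOn_iff_comap_subtypeVal (measurableSet_singleton _).compl]
    exact hFi.integrableOn
  have inner : ∀ θ : sphere (0 : (EuclideanSpace ℝ (Fin d))) 1,
      ∫ r : Ioi (0 : ℝ), G (θ, r) ∂(.volumeIoiPow (Module.finrank ℝ (EuclideanSpace ℝ (Fin d)) - 1)) = - g 0 := by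
    intro θ
    have hθ : ‖θ.1‖ = 1 := by simp
    rw [← integral_ray hg hs θ.1 hθ]
    simp only [Measure.volumeIoiPow, ENNReal.ofReal]
    rw [integral_withDensity_eq_integral_smul,
      integral_subtype_comap measurableSet_Ioi
        fun a : ℝ ↦ Real.toNNReal (a ^ (Module.finrank ℝ (EuclideanSpace ℝ (Fin d)) - 1)) • F (a • θ.1)]
    · refine setIntegral_congr_fun measurableSet_Ioi fun r hr => ?_
      have hr0 : 0 < r := hr
      simp only [hF]
      rw [NNReal.smul_def, Real.coe_toNNReal _ (by positivity), norm_smul, hθ, mul_one,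
        Real.norm_of_nonneg hr0.le, map_smul, smul_smul, smul_smul,
        finrank_euclideanSpace_fin]
      have : r ^ (d - 1) * r ^ (-(d : ℝ)) * r = 1 := by
        rw [mul_right_comm, ← pow_succ, Nat.sub_add_cancel (by omega), ← Real.rpow_natCast,
          ← Real.rpow_add hr0]
        simp
      rw [this, one_smul]
    · exact (measurable_subtype_coe.pow_const _).real_toNNReal
  calc ∫ y, F y = ∫ x : ({(0)}ᶜ : Set (EuclideanSpace ℝ (Fin d))), F x.1 ∂((volume : Measure (EuclideanSpace ℝ (Fin d))).comap Subtype.val) := by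
        rw [integral_subtype_comap (measurableSet_singleton _).compl F,
          restrict_compl_singleton]
    _ = ∫ x, G x ∂((volume : Measure (EuclideanSpace ℝ (Fin d))).toSphere.prod
          (.volumeIoiPow (Module.finrank ℝ (EuclideanSpace ℝ (Fin d)) - 1))) := by
        rw [← hmp.integral_comp (Homeomorph.measurableEmbedding _)]
        exact integral_congr_ae (Eventually.of_forall fun x => (hGF x).symm)
    _ = ∫ θ, (∫ r, G (θ, r) ∂(.volumeIoiPow (Module.finrank ℝ (EuclideanSpace ℝ (Fin d)) - 1)))
          ∂(volume : Measure (EuclideanSpace ℝ (Fin d))).toSphere := integral_prod _ hGi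
    _ = _ := by
        simp_rw [inner]
        rw [integral_const, Measure.toSphere_real_apply_univ, smul_neg,
          finrank_euclideanSpace_fin, Measure.real]

lemma hasFDerivAt_psi_reg {d : ℕ} (hd : 2 ≤ d) {ε : ℝ} (hε : 0 < ε)
    (y : EuclideanSpace ℝ (Fin d)) :
    HasFDerivAt (fun y : EuclideanSpace ℝ (Fin d) => psi d (‖y‖ ^ 2 + ε))
      ((npK d / 2 * (‖y‖ ^ 2 + ε) ^ (-(d : ℝ) / 2)) • ((2 : ℝ) • innerSL ℝ y)) y := by
  have h1 : HasFDerivAt (fun y : EuclideanSpace ℝ (Fin d) => ‖y‖ ^ 2 + ε)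
      ((2 : ℝ) • innerSL ℝ y) y := by
    have := ((hasStrictFDerivAt_norm_sq y).hasFDerivAt).add_const ε
    refine this.congr_fderiv ?_
    ext z; simp
  exact (hasDerivAt_psi hd (by positivity : 0 < ‖y‖ ^ 2 + ε)).comp_hasFDerivAt y h1

lemma parts_reg {d : ℕ} (hd : 2 ≤ d) {X : Type*} [NormedAddCommGroup X]
    [NormedSpace ℝ X] {h : EuclideanSpace ℝ (Fin d) → X} (hh : ContDiff ℝ 1 h)
    (hs : HasCompactSupport h) (i : Fin d) {ε : ℝ} (hε : 0 < ε) :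
    ∫ y, psi d (‖y‖ ^ 2 + ε) • fderiv ℝ h y (stdBasis i) =
      - ∫ y, (npK d * ((‖y‖ ^ 2 + ε) ^ (-(d : ℝ) / 2) * y i)) • h y := by
  have hcont : Continuous (fun y : EuclideanSpace ℝ (Fin d) => psi d (‖y‖ ^ 2 + ε)) :=
    continuous_iff_continuousAt.2 fun y => (hasFDerivAt_psi_reg hd hε y).continuousAt
  have hfd : ∀ y : EuclideanSpace ℝ (Fin d),
      fderiv ℝ (fun y : EuclideanSpace ℝ (Fin d) => psi d (‖y‖ ^ 2 + ε)) y (stdBasis i) =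
      npK d * ((‖y‖ ^ 2 + ε) ^ (-(d : ℝ) / 2) * y i) := by
    intro y
    rw [(hasFDerivAt_psi_reg hd hε y).fderiv]
    simp [stdBasis, EuclideanSpace.inner_single_right]
    ring
  have hcont' : Continuous (fun y : EuclideanSpace ℝ (Fin d) =>
      npK d * ((‖y‖ ^ 2 + ε) ^ (-(d : ℝ) / 2) * y i)) := by
    refine continuous_const.mul (Continuous.mul ?_ (by fun_prop))
    refine Continuous.rpow_const (by fun_prop) fun y => Or.inl (by positivity)
  have := integral_smul_fderiv_eq_neg_fderiv_smul_of_integrable (𝕜 := ℝ)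
    (μ := (volume : Measure (EuclideanSpace ℝ (Fin d))))
    (f := fun y : EuclideanSpace ℝ (Fin d) => psi d (‖y‖ ^ 2 + ε)) (g := h)
    (v := stdBasis i) ?_ ?_ ?_ ?_ ?_
  · rw [this]; simp_rw [hfd]
  · simp_rw [hfd]
    exact (hcont'.smul hh.continuous).integrable_of_hasCompactSupport hs.smul_left
  · have hc2 : Continuous fun y => fderiv ℝ h y (stdBasis i) :=
      (hh.continuous_fderiv one_ne_zero).clm_apply continuous_const
    exact (hcont.smul hc2).integrable_of_hasCompactSupport
      (hs.fderiv_apply ℝ _).smul_left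
  · exact (hcont.smul hh.continuous).integrable_of_hasCompactSupport hs.smul_left
  · exact fun y _ => (hasFDerivAt_psi_reg hd hε y).differentiableAt
  · exact fun y _ => hh.differentiable one_ne_zero y

lemma rpow_sq_half {d : ℕ} {r : ℝ} (hr : 0 ≤ r) : (r ^ 2) ^ (-(d : ℝ) / 2) = r ^ (-(d : ℝ)) := by
  rw [← Real.rpow_natCast, ← Real.rpow_mul hr]; congr 1; push_cast; ring

lemma npK_nonneg (d : ℕ) : 0 ≤ npK d := by unfold npK; positivity

lemma abs_coord_le {d : ℕ} (y : EuclideanSpace ℝ (Fin d)) (i : Fin d) : |y i| ≤ ‖y‖ :=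
  PiLp.norm_apply_le y i

lemma parts {d : ℕ} (hd : 2 ≤ d) {X : Type*} [NormedAddCommGroup X]
    [NormedSpace ℝ X] {h : EuclideanSpace ℝ (Fin d) → X} (hh : ContDiff ℝ 1 h)
    (hs : HasCompactSupport h) (i : Fin d) :
    ∫ y, fundSol d y • fderiv ℝ h y (stdBasis i) =
      - ∫ y, (npK d * (‖y‖ ^ (-(d : ℝ)) * y i)) • h y := by
  have hc2 : Continuous fun y => fderiv ℝ h y (stdBasis i) :=
    (hh.continuous_fderiv one_ne_zero).clm_apply continuous_const
  have hs2 : HasCompactSupport fun y => fderiv ℝ h y (stdBasis i) := hs.fderiv_apply ℝ _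
  have hev : ∀ᶠ ε : ℝ in 𝓝[>] 0, 0 < ε ∧ ε ≤ 1 := by
    filter_upwards [Ioc_mem_nhdsGT (zero_lt_one' ℝ)] with ε hε using hε
  have hlim : ∀ r : ℝ, Tendsto (fun ε : ℝ => r ^ 2 + ε) (𝓝[>] 0) (𝓝 (r ^ 2)) := by
    intro r
    have : Tendsto (fun ε : ℝ => r ^ 2 + ε) (𝓝 0) (𝓝 (r ^ 2 + 0)) :=
      (continuous_const.add continuous_id).tendsto 0
    rw [add_zero] at this
    exact this.mono_left nhdsWithin_le_nhds
  obtain ⟨C, hC⟩ := psi_bound hd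
  have L1 : Tendsto (fun ε : ℝ => ∫ y, psi d (‖y‖ ^ 2 + ε) • fderiv ℝ h y (stdBasis i))
      (𝓝[>] 0) (𝓝 (∫ y, fundSol d y • fderiv ℝ h y (stdBasis i))) := by
    refine tendsto_integral_filter_of_dominated_convergence
      (fun y => C * (bnd d ‖y‖ * ‖fderiv ℝ h y (stdBasis i)‖)) ?_ ?_ ?_ ?_
    · refine Eventually.of_forall fun ε => AEStronglyMeasurable.smul ?_ hc2.aestronglyMeasurable
      exact ((measurable_psi d).comp
        ((measurable_norm.pow_const 2).add_const ε)).aestronglyMeasurable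
    · filter_upwards [hev] with ε hε
      filter_upwards [ae_ne_zero hd] with y hy
      rw [norm_smul, ← mul_assoc]
      gcongr
      exact hC _ _ (norm_pos_iff.2 hy) hε.1.le hε.2
    · exact (integrable_bnd_smul hd hc2 hs2).const_mul C
    · filter_upwards [ae_ne_zero hd] with y hy
      refine Tendsto.smul_const ?_ _
      rw [fundSol_eq_psi]
      have hp : 0 < ‖y‖ ^ 2 := by have := norm_pos_iff.2 hy; positivity
      exact (hasDerivAt_psi hd hp).continuousAt.tendsto.comp (hlim _)
  have L2 : Tendsto (fun ε : ℝ => ∫ y, (npK d * ((‖y‖ ^ 2 + ε) ^ (-(d : ℝ) / 2) * y i)) • h y)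
      (𝓝[>] 0) (𝓝 (∫ y, (npK d * (‖y‖ ^ (-(d : ℝ)) * y i)) • h y)) := by
    refine tendsto_integral_filter_of_dominated_convergence
      (fun y => npK d * (bnd d ‖y‖ * ‖h y‖)) ?_ ?_ ?_ ?_
    · refine Eventually.of_forall fun ε => AEStronglyMeasurable.smul ?_
        hh.continuous.aestronglyMeasurable
      refine Measurable.aestronglyMeasurable ?_
      refine Measurable.const_mul (Measurable.mul ?_ (by fun_prop)) _
      exact ((measurable_norm.pow_const 2).add_const ε).pow_const _
    · filter_upwards [hev] with ε hε
      filter_upwards [ae_ne_zero hd] with y hy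
      have hp := norm_pos_iff.2 hy
      have hε0 := hε.1
      rw [norm_smul, ← mul_assoc (npK d) (bnd d _), norm_mul, Real.norm_of_nonneg (npK_nonneg d), norm_mul,
        Real.norm_of_nonneg (by positivity)]
      have hK := npK_nonneg d
      gcongr
      calc (‖y‖ ^ 2 + ε) ^ (-(d : ℝ) / 2) * ‖y i‖
          ≤ (‖y‖ ^ 2) ^ (-(d : ℝ) / 2) * ‖y‖ := by
            gcongr ?_ * ?_
            · refine Real.rpow_le_rpow_of_nonpos (by positivity) (by linarith) ?_
              have : (0 : ℝ) ≤ d := Nat.cast_nonneg d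
              linarith
            · exact abs_coord_le y i
        _ ≤ _ := by rw [rpow_sq_half hp.le]; exact rpow_mul_le_bnd hp
    · exact (integrable_bnd_smul hd hh.continuous hs).const_mul _
    · filter_upwards [ae_ne_zero hd] with y hy
      have hp : 0 < ‖y‖ ^ 2 := by have := norm_pos_iff.2 hy; positivity
      refine Tendsto.smul_const (Tendsto.const_mul _ (Tendsto.mul_const _ ?_)) _
      rw [← rpow_sq_half (norm_nonneg y)]
      exact (Real.continuousAt_rpow_const _ _ (Or.inl hp.ne')).tendsto.comp (hlim _)
  refine tendsto_nhds_unique L1 (L2.neg.congr' ?_)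
  filter_upwards [hev] with ε hε
  exact (parts_reg hd hh hs i hε.1).symm

lemma sum_coord {d : ℕ} {X : Type*} [NormedAddCommGroup X]
    [NormedSpace ℝ X] (L : EuclideanSpace ℝ (Fin d) →L[ℝ] X) (y : EuclideanSpace ℝ (Fin d)) :
    ∑ i, y i • L (stdBasis i) = L y := by
  have : y = ∑ i, y i • stdBasis i := by
    ext j
    simp [stdBasis, Finset.sum_apply, Pi.single_apply]
  conv_rhs => rw [this]
  simp [map_sum]

lemma integral_fundSol_lap {d : ℕ} (hd : 2 ≤ d) {X : Type*} [NormedAddCommGroup X]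
    [NormedSpace ℝ X] [CompleteSpace X] {g : EuclideanSpace ℝ (Fin d) → X}
    (hg : ContDiff ℝ 2 g) (hs : HasCompactSupport g) :
    ∫ y, fundSol d y • lap g y = g 0 := by
  have hD : ∀ i, ContDiff ℝ 1 (fun y => fderiv ℝ g y (stdBasis i)) := fun i =>
    (hg.fderiv_right (by norm_num)).clm_apply contDiff_const
  have hDs : ∀ i, HasCompactSupport (fun y => fderiv ℝ g y (stdBasis i)) := fun i =>
    hs.fderiv_apply ℝ _
  have hg1 : ContDiff ℝ 1 g := hg.of_le (by norm_num)
  unfold lap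
  simp_rw [Finset.smul_sum]
  rw [integral_finsetSum]
  swap
  · intro i _
    refine (locallyIntegrable_fundSol hd).integrable_smul_right_of_hasCompactSupport ?_ ?_
    · exact ((hD i).continuous_fderiv one_ne_zero).clm_apply continuous_const
    · exact (hDs i).fderiv_apply ℝ _
  simp_rw [parts hd (hD _) (hDs _)]
  rw [Finset.sum_neg_distrib, ← integral_finsetSum]
  swap
  · intro i _
    refine ((integrable_bnd_smul hd (hD i).continuous (hDs i)).const_mul (npK d)).mono' ?_ ?_
    · refine AEStronglyMeasurable.smul ?_ (hD i).continuous.aestronglyMeasurable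
      refine Measurable.aestronglyMeasurable ?_
      refine Measurable.const_mul (Measurable.mul ?_ (by fun_prop)) _
      exact measurable_norm.pow_const _
    · filter_upwards [ae_ne_zero hd] with y hy
      have hp := norm_pos_iff.2 hy
      have hK := npK_nonneg d
      rw [norm_smul, ← mul_assoc (npK d) (bnd d _), norm_mul, Real.norm_of_nonneg (npK_nonneg d), norm_mul,
        Real.norm_of_nonneg (by positivity)]
      gcongr
      refine le_trans ?_ (rpow_mul_le_bnd hp)
      gcongr
      exact abs_coord_le y i
  have e : ∀ y : EuclideanSpace ℝ (Fin d),
      ∑ i, (npK d * (‖y‖ ^ (-(d : ℝ)) * y i)) • fderiv ℝ g y (stdBasis i) =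
      npK d • (‖y‖ ^ (-(d : ℝ)) • fderiv ℝ g y y) := by
    intro y
    rw [← sum_coord (fderiv ℝ g y) y, Finset.smul_sum, Finset.smul_sum]
    simp_rw [smul_smul]
  simp_rw [e]
  rw [integral_smul, integral_polar hd hg1 hs, smul_neg, neg_neg, smul_smul, npK,
    inv_mul_cancel₀, one_smul]
  have h1 : (d : ℝ) ≠ 0 := by
    have : d ≠ 0 := by omega
    exact_mod_cast this
  refine mul_ne_zero h1 (ENNReal.toReal_pos ?_ ?_).ne'
  · exact (measure_ball_pos _ _ one_pos).ne'
  · exact measure_ball_lt_top.ne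

open scoped Convolution in
lemma fderiv_conv {d : ℕ} (hd : 2 ≤ d) {X : Type*} [NormedAddCommGroup X]
    [NormedSpace ℝ X] [CompleteSpace X] {g : EuclideanSpace ℝ (Fin d) → X}
    (hg : ContDiff ℝ 1 g) (hs : HasCompactSupport g) (v x : EuclideanSpace ℝ (Fin d)) :
    fderiv ℝ (fun ξ => ∫ η, fundSol d η • g (ξ - η)) x v =
      ∫ η, fundSol d η • fderiv ℝ g (x - η) v := by
  have h := hs.hasFDerivAt_convolution_right (ContinuousLinearMap.lsmul ℝ ℝ)
    (locallyIntegrable_fundSol hd) hg x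
  have h2 := convolution_precompR_apply (ContinuousLinearMap.lsmul ℝ ℝ)
    (locallyIntegrable_fundSol hd) (hs.fderiv ℝ) (hg.continuous_fderiv one_ne_zero) x v
  rw [← h.fderiv] at h2
  exact h2

/-- For `f ∈ C_c^∞(ℝ^d, X)`, the Newtonian potential `Φ ∗ f` is
`C^∞` and satisfies `Δ(Φ ∗ f) = f` everywhere. -/
theorem newtonian_potential_smooth {d : ℕ} (hd : 2 ≤ d)
    {X : Type*} [NormedAddCommGroup X] [NormedSpace ℝ X] [CompleteSpace X]
    (f : EuclideanSpace ℝ (Fin d) → X) (hf : ContDiff ℝ (⊤ : ℕ∞) f)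
    (hsupp : HasCompactSupport f) :
    ContDiff ℝ (⊤ : ℕ∞) (fun ξ => ∫ η, fundSol d (ξ - η) • f η) ∧
    ∀ ξ : EuclideanSpace ℝ (Fin d),
      lap (fun ζ => ∫ η, fundSol d (ζ - η) • f η) ξ = f ξ := by
  have hswap : (fun ξ => ∫ η, fundSol d (ξ - η) • f η) =
      fun ξ => ∫ η, fundSol d η • f (ξ - η) := by
    funext ξ
    exact (convolution_lsmul_swap (𝕜 := ℝ) (f := fundSol d) (g := f) (x := ξ)
      (μ := volume)).symm
  rw [hswap]
  refine ⟨hsupp.contDiff_convolution_right (ContinuousLinearMap.lsmul ℝ ℝ)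
    (locallyIntegrable_fundSol hd) hf, fun ξ => ?_⟩
  have hf2 : ContDiff ℝ 2 f := contDiff_infty.1 hf 2
  have hf1 : ContDiff ℝ 1 f := hf2.of_le (by norm_num)
  have hD : ∀ i, ContDiff ℝ 1 (fun y => fderiv ℝ f y (stdBasis i)) := fun i =>
    (hf2.fderiv_right (by norm_num)).clm_apply contDiff_const
  have hDs : ∀ i, HasCompactSupport (fun y => fderiv ℝ f y (stdBasis i)) := fun i =>
    hsupp.fderiv_apply ℝ _
  -- the reflected and translated function
  have hg : ContDiff ℝ 2 (fun y => f (ξ - y)) := hf2.comp (by fun_prop)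
  have hgs : HasCompactSupport (fun y => f (ξ - y)) :=
    hsupp.comp_homeomorph (Homeomorph.subLeft ξ)
  have key := integral_fundSol_lap hd hg hgs
  rw [sub_zero] at key
  have d1 : ∀ (u : EuclideanSpace ℝ (Fin d) → X) (_ : ContDiff ℝ 1 u) (y v : EuclideanSpace ℝ (Fin d)),
      fderiv ℝ (fun y => u (ξ - y)) y v = - fderiv ℝ u (ξ - y) v := by
    intro u hu y v
    have a1 : HasFDerivAt u (fderiv ℝ u (ξ - y)) (ξ - y) :=
      (hu.differentiable one_ne_zero _).hasFDerivAt
    have a2 := (hasFDerivAt_id (𝕜 := ℝ) y).const_sub ξ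
    have a3 := a1.comp y a2
    have a4 := a3.fderiv
    simp only [Function.comp_def, id] at a4
    rw [a4]; simp
  have hlap : ∀ y, lap (fun y => f (ξ - y)) y = lap f (ξ - y) := by
    intro y
    unfold lap
    refine Finset.sum_congr rfl fun i _ => ?_
    simp_rw [d1 f hf1]
    rw [fderiv_fun_neg, ContinuousLinearMap.neg_apply,
      d1 (fun z => fderiv ℝ f z (stdBasis i)) (hD i), neg_neg]
  simp_rw [hlap] at key
  rw [← key]
  unfold lap
  simp_rw [fderiv_conv hd hf1 hsupp, fderiv_conv hd (hD _) (hDs _), Finset.smul_sum]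
  rw [integral_finsetSum]
  intro i _
  refine (locallyIntegrable_fundSol hd).integrable_smul_right_of_hasCompactSupport ?_ ?_
  · exact (((hD i).continuous_fderiv one_ne_zero).clm_apply continuous_const).comp (by fun_prop)
  · exact ((hDs i).fderiv_apply ℝ (stdBasis i)).comp_homeomorph (Homeomorph.subLeft ξ)
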